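/- arXiv:1705.08379 — 5 statements merged into one kernel-verified Lean document; each statement's English description precedes it below -/
import Mathlib

section
/- Let G be a finite simple graph, P a perfect edge dominating set of G, and (B,Y,W) the 3-coloring of V(G) associated to P. Then every induced triangle of G (three pairwise adjacent vertices) either has all three vertices in B, or has exactly two vertices in Y and one vertex in W. -/
/-- An edge `e` dominates an edge `f` if they share an endpoint (in particular,
every edge dominates itself). -/
def edgeDom {V : Type*} (e f : Sym2 V) : Prop := ∃ v, v ∈ e ∧ v ∈ f

/-- `P` is a perfect edge dominating set of `G`: `P ⊆ E(G)` and every edge of `G`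
not in `P` is dominated by exactly one edge of `P`. -/
def IsPEDS {V : Type*} (G : SimpleGraph V) (P : Set (Sym2 V)) : Prop :=
  P ⊆ G.edgeSet ∧ ∀ f ∈ G.edgeSet, f ∉ P → ∃! e, e ∈ P ∧ edgeDom e f

/-- A black vertex: incident to at least two edges of `P`. -/
def Blackv {V : Type*} (P : Set (Sym2 V)) (v : V) : Prop :=
  ∃ e ∈ P, ∃ f ∈ P, e ≠ f ∧ v ∈ e ∧ v ∈ f

/-- A yellow vertex: incident to exactly one edge of `P`. -/
def Yellowv {V : Type*} (P : Set (Sym2 V)) (v : V) : Prop := ∃! e, e ∈ P ∧ v ∈ e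

/-- A white vertex: incident to no edge of `P`. -/
def Whitev {V : Type*} (P : Set (Sym2 V)) (v : V) : Prop := ∀ e ∈ P, v ∉ e

/-!
An edge with a white endpoint is not in `P`, so the unique edge of `P` dominating it is the only one
at its other endpoint: every neighbour of a white vertex is yellow. An edge `xy` without white
endpoints is dominated both by an edge of `P` at `x` and by one at `y`; were `xy` not in `P`, these
would coincide and equal `xy`. So all edges of a triangle without white vertices lie in `P`, and its
vertices are black.
-/

section

variable {V : Type*} {G : SimpleGraph V} {P : Set (Sym2 V)} {x y z : V}

theorem edgeDom_mk_iff {e : Sym2 V} : edgeDom e s(x, y) ↔ x ∈ e ∨ y ∈ e := by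
  simp only [edgeDom, Sym2.mem_iff, and_or_left, exists_or, exists_eq_right]

theorem Whitev.mk_notMem (hx : Whitev P x) : s(x, y) ∉ P :=
  fun hxy => hx _ hxy (Sym2.mem_mk_left x y)

theorem Blackv.of_mk_mem_of_mk_mem (hxy : s(x, y) ∈ P) (hxz : s(x, z) ∈ P) (hyz : y ≠ z) :
    Blackv P x :=
  ⟨_, hxy, _, hxz, mt Sym2.congr_right.mp hyz, Sym2.mem_mk_left x y, Sym2.mem_mk_left x z⟩

theorem IsPEDS.yellowv_of_adj_whitev (hP : IsPEDS G P) (hxy : G.Adj x y) (hx : Whitev P x) :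
    Yellowv P y := by
  obtain ⟨e, ⟨heP, hdom⟩, huniq⟩ := hP.2 s(x, y) hxy hx.mk_notMem
  have hye : y ∈ e := (edgeDom_mk_iff.mp hdom).resolve_left (hx e heP)
  exact ⟨e, ⟨heP, hye⟩, fun f ⟨hfP, hyf⟩ => huniq f ⟨hfP, edgeDom_mk_iff.mpr (.inr hyf)⟩⟩

theorem IsPEDS.mk_mem_of_not_whitev (hP : IsPEDS G P) (hxy : G.Adj x y)
    (hx : ¬Whitev P x) (hy : ¬Whitev P y) : s(x, y) ∈ P := by
  simp only [Whitev, not_forall, not_not] at hx hy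
  obtain ⟨e, heP, hxe⟩ := hx
  obtain ⟨f, hfP, hyf⟩ := hy
  by_contra hxyP
  have hef : e = f := (hP.2 s(x, y) hxy hxyP).unique
    ⟨heP, edgeDom_mk_iff.mpr (.inl hxe)⟩ ⟨hfP, edgeDom_mk_iff.mpr (.inr hyf)⟩
  have he : e = s(x, y) := (Sym2.mem_and_mem_iff hxy.ne).mp ⟨hxe, hef ▸ hyf⟩
  exact hxyP (he ▸ heP)

theorem IsPEDS.blackv_of_adj_of_adj (hP : IsPEDS G P)
    (hxy : G.Adj x y) (hxz : G.Adj x z) (hyz : y ≠ z)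
    (hx : ¬Whitev P x) (hy : ¬Whitev P y) (hz : ¬Whitev P z) : Blackv P x :=
  .of_mk_mem_of_mk_mem (hP.mk_mem_of_not_whitev hxy hx hy) (hP.mk_mem_of_not_whitev hxz hx hz) hyz

end

theorem triangle_coloring_general {V : Type*} (G : SimpleGraph V)
    (P : Set (Sym2 V)) (hP : IsPEDS G P) {a b c : V}
    (hab : G.Adj a b) (hac : G.Adj a c) (hbc : G.Adj b c) :
    (Blackv P a ∧ Blackv P b ∧ Blackv P c) ∨
    (Yellowv P a ∧ Yellowv P b ∧ Whitev P c) ∨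
    (Yellowv P a ∧ Whitev P b ∧ Yellowv P c) ∨
    (Whitev P a ∧ Yellowv P b ∧ Yellowv P c) := by
  by_cases ha : Whitev P a
  · exact .inr <| .inr <| .inr
      ⟨ha, hP.yellowv_of_adj_whitev hab ha, hP.yellowv_of_adj_whitev hac ha⟩
  by_cases hb : Whitev P b
  · exact .inr <| .inr <| .inl
      ⟨hP.yellowv_of_adj_whitev hab.symm hb, hb, hP.yellowv_of_adj_whitev hbc hb⟩
  by_cases hc : Whitev P c
  · exact .inr <| .inl
      ⟨hP.yellowv_of_adj_whitev hac.symm hc, hP.yellowv_of_adj_whitev hbc.symm hc, hc⟩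
  exact .inl
    ⟨hP.blackv_of_adj_of_adj hab hac hbc.ne ha hb hc,
      hP.blackv_of_adj_of_adj hab.symm hbc hac.ne hb ha hc,
      hP.blackv_of_adj_of_adj hac.symm hbc.symm hab.ne hc ha hb⟩

/-- Every induced triangle of `G` either has all three vertices black, or exactly
two yellow vertices and one white vertex, with respect to a perfect edge
dominating set `P`. -/
theorem triangle_coloring {V : Type*} [Fintype V] (G : SimpleGraph V)
    (P : Set (Sym2 V)) (hP : IsPEDS G P) {a b c : V}
    (hab : G.Adj a b) (hac : G.Adj a c) (hbc : G.Adj b c) :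
    (Blackv P a ∧ Blackv P b ∧ Blackv P c) ∨
    (Yellowv P a ∧ Yellowv P b ∧ Whitev P c) ∨
    (Yellowv P a ∧ Whitev P b ∧ Yellowv P c) ∨
    (Whitev P a ∧ Yellowv P b ∧ Yellowv P c) :=
  triangle_coloring_general G P hP hab hac hbc
end

section
/- Let r ≥ 1 and let G be an r-regular finite simple graph on n vertices. If D is an efficient edge dominating set of G, then |D| = rn/(4r-2). -/
/-- `D` is an efficient edge dominating set of `G`: `D ⊆ E(G)` and every edge
of `G` is dominated by exactly one edge of `D`. -/
def IsEEDS {V : Type*} (G : SimpleGraph V) (D : Set (Sym2 V)) : Prop :=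
  D ⊆ G.edgeSet ∧ ∀ f ∈ G.edgeSet, ∃! e, e ∈ D ∧ edgeDom e f

/-- `G` is `r`-regular: every vertex has exactly `r` neighbors. -/
def IsRegular' {V : Type*} (G : SimpleGraph V) (r : ℕ) : Prop :=
  ∀ v : V, (G.neighborSet v).ncard = r

/-!
In any graph an edge `uv` dominates exactly `deg u + deg v - 1` edges, since `uv` is the only edge
incident to both `u` and `v`. The sets of edges dominated by the members of an efficient edge
dominating set `D` partition the edge set, so in an `r`-regular graph `|E| = (2r - 1)|D|`; compare
with the handshake identity `2|E| = rn`.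
-/

section ClosedEdgeNeighborhood

variable {V : Type*} (G : SimpleGraph V)

/-- The closed neighborhood of `e` in the line graph of `G`: the edges of `G` dominated by `e`.
The pair `e` itself is not required to be an edge of `G`. -/
def closedEdgeNeighborSet (e : Sym2 V) : Set (Sym2 V) :=
  {f ∈ G.edgeSet | edgeDom e f}

lemma closedEdgeNeighborSet_mk (u v : V) :
    closedEdgeNeighborSet G s(u, v) = G.incidenceSet u ∪ G.incidenceSet v := by
  ext f
  simp [closedEdgeNeighborSet, edgeDom, SimpleGraph.incidenceSet, and_or_left]

lemma ncard_incidenceSet (v : V) [Fintype (G.neighborSet v)] :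
    (G.incidenceSet v).ncard = G.degree v := by
  classical
  rw [← G.coe_incidenceFinset, Set.ncard_coe_finset, G.card_incidenceFinset_eq_degree]

variable [G.LocallyFinite]

lemma finite_incidenceSet (v : V) : (G.incidenceSet v).Finite := by
  classical
  exact Set.toFinite _

lemma finite_closedEdgeNeighborSet (e : Sym2 V) : (closedEdgeNeighborSet G e).Finite := by
  induction e with
  | _ u v =>
    rw [closedEdgeNeighborSet_mk]
    exact (finite_incidenceSet G u).union (finite_incidenceSet G v)

variable {G}

lemma ncard_closedEdgeNeighborSet_add_one [DecidableEq V] {e : Sym2 V} (he : e ∈ G.edgeSet) :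
    (closedEdgeNeighborSet G e).ncard + 1 = ∑ v ∈ e.toFinset, G.degree v := by
  induction e with
  | _ u v =>
    have huv : G.Adj u v := he
    calc (closedEdgeNeighborSet G s(u, v)).ncard + 1
        = (G.incidenceSet u ∪ G.incidenceSet v).ncard
            + (G.incidenceSet u ∩ G.incidenceSet v).ncard := by
          rw [closedEdgeNeighborSet_mk, G.incidenceSet_inter_incidenceSet_of_adj huv,
            Set.ncard_singleton]
      _ = G.degree u + G.degree v := by
          rw [Set.ncard_union_add_ncard_inter _ _ (finite_incidenceSet G u)
            (finite_incidenceSet G v), ncard_incidenceSet, ncard_incidenceSet]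
      _ = ∑ w ∈ s(u, v).toFinset, G.degree w := by
          rw [Sym2.toFinset_mk_eq, Finset.sum_pair huv.ne]

end ClosedEdgeNeighborhood

namespace IsEEDS

variable {V : Type*} {G : SimpleGraph V}

lemma pairwiseDisjoint_closedEdgeNeighborSet {D : Set (Sym2 V)} (hD : IsEEDS G D) :
    D.PairwiseDisjoint (closedEdgeNeighborSet G) := by
  intro d hd e he hde
  refine Set.disjoint_left.2 fun f hdf hef ↦ hde ?_
  exact (hD.2 f hdf.1).unique ⟨hd, hdf.2⟩ ⟨he, hef.2⟩

lemma biUnion_closedEdgeNeighborSet {D : Set (Sym2 V)} (hD : IsEEDS G D) :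
    ⋃ e ∈ D, closedEdgeNeighborSet G e = G.edgeSet := by
  refine Set.Subset.antisymm (Set.iUnion₂_subset fun e _ f hf ↦ hf.1) fun f hf ↦ ?_
  obtain ⟨e, he, hef⟩ := (hD.2 f hf).exists
  exact Set.mem_biUnion he ⟨hf, hef⟩

variable [G.LocallyFinite] {D : Finset (Sym2 V)}

lemma ncard_edgeSet (hD : IsEEDS G D) :
    G.edgeSet.ncard = ∑ e ∈ D, (closedEdgeNeighborSet G e).ncard := by
  rw [← hD.biUnion_closedEdgeNeighborSet,
    D.finite_toSet.ncard_biUnion (fun e _ ↦ finite_closedEdgeNeighborSet G e)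
      hD.pairwiseDisjoint_closedEdgeNeighborSet,
    finsum_mem_coe_finset]

lemma ncard_edgeSet_add_card [DecidableEq V] (hD : IsEEDS G D) :
    G.edgeSet.ncard + D.card = ∑ e ∈ D, ∑ v ∈ e.toFinset, G.degree v := by
  rw [hD.ncard_edgeSet, Finset.card_eq_sum_ones, ← Finset.sum_add_distrib]
  exact Finset.sum_congr rfl fun e he ↦ ncard_closedEdgeNeighborSet_add_one (hD.1 he)

lemma ncard_edgeSet_add_card_of_isRegularOfDegree {r : ℕ} (hD : IsEEDS G D)
    (hG : G.IsRegularOfDegree r) : G.edgeSet.ncard + D.card = 2 * r * D.card := by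
  classical
  have sum_degree_ends : ∀ e ∈ D, ∑ v ∈ e.toFinset, G.degree v = 2 * r := fun e he ↦ by
    simp only [hG.degree_eq, Finset.sum_const, smul_eq_mul,
      Sym2.card_toFinset_of_not_isDiag e (G.not_isDiag_of_mem_edgeSet (hD.1 he))]
  rw [hD.ncard_edgeSet_add_card, Finset.sum_congr rfl sum_degree_ends, Finset.sum_const,
    smul_eq_mul, mul_comm]

end IsEEDS

lemma IsRegular'.isRegularOfDegree {V : Type*} {G : SimpleGraph V} [G.LocallyFinite] {r : ℕ}
    (hG : IsRegular' G r) : G.IsRegularOfDegree r := fun v ↦ by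
  rw [← hG v, ← G.coe_neighborFinset, Set.ncard_coe_finset, G.card_neighborFinset_eq_degree]

lemma card_mul_eq_two_mul_ncard_edgeSet_of_isRegularOfDegree {V : Type*} [Fintype V]
    {G : SimpleGraph V} [DecidableRel G.Adj] {r : ℕ} (hG : G.IsRegularOfDegree r) :
    Fintype.card V * r = 2 * G.edgeSet.ncard := by
  classical
  have handshake := G.sum_degrees_eq_twice_card_edges
  simpa [hG.degree_eq, ← Set.ncard_coe_finset] using handshake

/-- If `G` is an `r`-regular graph (`r ≥ 1`) on `n` vertices and `D` is an
efficient edge dominating set of `G`, then `|D| = r n / (4 r - 2)`. -/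
theorem eeds_card {V : Type*} [Fintype V] (G : SimpleGraph V) (r : ℕ) (hr : 1 ≤ r)
    (hreg : IsRegular' G r) (D : Set (Sym2 V)) (hD : IsEEDS G D) :
    (D.ncard : ℚ) = (r * Fintype.card V : ℚ) / (4 * r - 2) := by
  classical
  lift D to Finset (Sym2 V) using D.toFinite
  have hG : G.IsRegularOfDegree r := hreg.isRegularOfDegree
  have count_dominated : (G.edgeSet.ncard + D.card : ℚ) = 2 * r * D.card := by
    exact_mod_cast hD.ncard_edgeSet_add_card_of_isRegularOfDegree hG
  have handshake : (Fintype.card V * r : ℚ) = 2 * G.edgeSet.ncard := by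
    exact_mod_cast card_mul_eq_two_mul_ncard_edgeSet_of_isRegularOfDegree hG
  have one_le_r : (1 : ℚ) ≤ r := by exact_mod_cast hr
  rw [Set.ncard_coe_finset, eq_div_iff (by linarith)]
  linear_combination -2 * count_dominated - handshake
end

section
/- Let G be a cubic (3-regular) finite simple graph on n vertices. Then the magnification M(G) is claw-free, has maximum degree at most 3, has exactly 12n vertices, and has exactly 33n/2 edges. -/
/-- The shield graph: the vertex `vᵢ` of the paper corresponds to `i - 1 : Fin 12`.
Its edges are the 12-cycle together with the three chords `v₂v₄, v₆v₈, v₁₀v₁₂`. -/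
def Shield : SimpleGraph (Fin 12) :=
  SimpleGraph.fromRel (fun i j =>
    j = i + 1 ∨ (i = 1 ∧ j = 3) ∨ (i = 5 ∧ j = 7) ∨ (i = 9 ∧ j = 11))

/-- The contact vertices `v₃, v₇, v₁₁` of the shield graph. -/
def Contacts : Set (Fin 12) := {2, 6, 10}

/-- A graph is claw-free if it has no induced `K_{1,3}`. -/
def ClawFree {W : Type*} (H : SimpleGraph W) : Prop :=
  ¬ ∃ a b c d : W, H.Adj a b ∧ H.Adj a c ∧ H.Adj a d ∧
    b ≠ c ∧ b ≠ d ∧ c ≠ d ∧ ¬ H.Adj b c ∧ ¬ H.Adj b d ∧ ¬ H.Adj c d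

/-- `H` (on vertex set `V × Fin 12`) is the magnification of the cubic graph `G`,
witnessed by the contact-assignment `f`: each vertex `v` of `G` is replaced by a
copy `{v} × Fin 12` of the shield graph, and each edge `uv` of `G` is replaced by
a single edge joining the contact vertex `f u v` of the copy of `u` to the contact
vertex `f v u` of the copy of `v`, with each of the three contact vertices of every
copy used for exactly one such edge. -/
def IsMagnification {V : Type*} (G : SimpleGraph V) (f : V → V → Fin 12)
    (H : SimpleGraph (V × Fin 12)) : Prop :=
  (∀ v u, G.Adj v u → f v u ∈ Contacts) ∧
  (∀ v, Set.InjOn (f v) (G.neighborSet v)) ∧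
  (∀ v, ∀ c ∈ Contacts, ∃ u, G.Adj v u ∧ f v u = c) ∧
  (∀ a b : V × Fin 12, H.Adj a b ↔
    ((a.1 = b.1 ∧ Shield.Adj a.2 b.2) ∨
     (G.Adj a.1 b.1 ∧ f a.1 b.1 = a.2 ∧ f b.1 a.1 = b.2)))

/-!
A magnification is a disjoint union of `n` shields together with a matching that has one edge for
each edge of `G`, so it has `15 n + 3 n / 2` edges. A shield vertex outside the contacts keeps its
neighbors, of which there are at most three, and a contact vertex gains one neighbor besides its
two in the shield. As for claws, the neighborhood of each shield vertex is covered by two cliques,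
and the two shield neighbors of a contact vertex are adjacent, so the neighborhoods in the
magnification are again covered by two cliques; among three neighbors of a vertex, two then lie in a
common clique.
-/

open SimpleGraph

theorem sum_ncard_fiber {α β : Type*} [Fintype β] (s : Set α) [Finite s] (g : α → β) :
    ∑ b, {a ∈ s | g a = b}.ncard = s.ncard := by
  classical
  have := Fintype.ofFinite s
  rw [Set.ncard_eq_toFinset_card' s,
    Finset.card_eq_sum_card_fiberwise fun a _ ↦ Finset.mem_coe.2 (Finset.mem_univ (g a))]
  refine Finset.sum_congr rfl fun b _ ↦ ?_
  rw [← Set.ncard_coe_finset, Finset.coe_filter]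
  simp only [Set.mem_toFinset]

theorem subsingleton_fiber_of_injOn {α β : Type*} {s : Set α} {g : α → β} (hg : Set.InjOn g s)
    (b : β) : {a ∈ s | g a = b}.Subsingleton :=
  fun _ hx _ hy ↦ hg hx.1 hy.1 (hx.2.trans hy.2.symm)

theorem ncard_neighborSet_eq_degree {V : Type*} (G : SimpleGraph V) (v : V)
    [Fintype (G.neighborSet v)] : (G.neighborSet v).ncard = G.degree v := by
  rw [← coe_neighborFinset, Set.ncard_coe_finset, card_neighborFinset_eq_degree]

section Handshake

variable {V : Type*} [Fintype V] (G : SimpleGraph V)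

theorem sum_ncard_neighborSet : ∑ v, (G.neighborSet v).ncard = 2 * G.edgeSet.ncard := by
  classical
  simp_rw [ncard_neighborSet_eq_degree]
  rw [sum_degrees_eq_twice_card_edges, ← coe_edgeFinset, Set.ncard_coe_finset]

variable {G}

theorem IsRegular'.two_mul_ncard_edgeSet {r : ℕ} (hG : IsRegular' G r) :
    2 * G.edgeSet.ncard = Fintype.card V * r := by
  rw [← sum_ncard_neighborSet, Fintype.sum_congr _ _ hG, Finset.sum_const, Finset.card_univ,
    smul_eq_mul]

end Handshake

/-- Quasi-line graphs: the neighborhood of every vertex is covered by two cliques. This property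
implies claw-freeness and, unlike the latter, comes with a certificate at each vertex. -/
def IsQuasiLine {W : Type*} (H : SimpleGraph W) : Prop :=
  ∀ a, ∃ A B : Set W, H.IsClique A ∧ H.IsClique B ∧ H.neighborSet a ⊆ A ∪ B

theorem IsQuasiLine.clawFree {W : Type*} {H : SimpleGraph W} (hH : IsQuasiLine H) :
    ClawFree H := by
  rintro ⟨a, b, c, d, hb, hc, hd, hbc, hbd, hcd, nbc, nbd, ncd⟩
  obtain ⟨A, B, hA, hB, hAB⟩ := hH a
  rcases hAB hb with hb | hb <;> rcases hAB hc with hc | hc <;> rcases hAB hd with hd | hd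
  exacts [nbc (hA hb hc hbc), nbc (hA hb hc hbc), nbd (hA hb hd hbd), ncd (hB hc hd hcd),
    ncd (hA hc hd hcd), nbd (hB hb hd hbd), nbc (hB hb hc hbc), nbc (hB hb hc hbc)]

/-- The graph obtained from `G` by replacing each vertex by a copy of the gadget `S` and each edge
`uv` by an edge from `f u v` in the copy at `u` to `f v u` in the copy at `v`. The magnification is
the case where `S` is the shield graph. -/
def gadgetExpansion {V ι : Type*} (S : SimpleGraph ι) (G : SimpleGraph V) (f : V → V → ι) :
    SimpleGraph (V × ι) where
  Adj a b := (a.1 = b.1 ∧ S.Adj a.2 b.2) ∨ (G.Adj a.1 b.1 ∧ f a.1 b.1 = a.2 ∧ f b.1 a.1 = b.2)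
  symm := ⟨fun _ _ ↦ Or.imp (And.imp Eq.symm .symm) fun ⟨h, ha, hb⟩ ↦ ⟨h.symm, hb, ha⟩⟩
  loopless := ⟨fun _ h ↦ h.elim (fun h ↦ h.2.ne rfl) fun h ↦ h.1.ne rfl⟩

namespace gadgetExpansion

variable {V ι : Type*} {S : SimpleGraph ι} {G : SimpleGraph V} {f : V → V → ι}

theorem neighborSet_eq (v : V) (i : ι) :
    (gadgetExpansion S G f).neighborSet (v, i) =
      Prod.mk v '' S.neighborSet i ∪
        (fun u ↦ (u, f u v)) '' {u ∈ G.neighborSet v | f v u = i} := by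
  ext ⟨w, j⟩
  simp only [gadgetExpansion, mem_neighborSet, Set.mem_union, Set.mem_image, Set.mem_ofPred_eq,
    Prod.mk.injEq]
  grind

theorem ncard_neighborSet (v : V) (i : ι) [Finite (S.neighborSet i)] [Finite (G.neighborSet v)] :
    ((gadgetExpansion S G f).neighborSet (v, i)).ncard =
      (S.neighborSet i).ncard + {u ∈ G.neighborSet v | f v u = i}.ncard := by
  have hfiber : {u ∈ G.neighborSet v | f v u = i}.Finite := (G.neighborSet v).toFinite.sep _
  have hdisj : Disjoint (Prod.mk v '' S.neighborSet i)
      ((fun u ↦ (u, f u v)) '' {u ∈ G.neighborSet v | f v u = i}) := by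
    rw [Set.disjoint_left]
    rintro _ ⟨j, -, rfl⟩ ⟨u, ⟨hu, -⟩, h⟩
    exact hu.ne (congrArg Prod.fst h).symm
  rw [neighborSet_eq,
    Set.ncard_union_eq hdisj ((S.neighborSet i).toFinite.image _) (hfiber.image _),
    Set.ncard_image_of_injective _ (Prod.mk_right_injective v),
    Set.ncard_image_of_injective _ fun _ _ h ↦ congrArg Prod.fst h]

theorem ncard_edgeSet [Fintype V] [Finite ι] :
    (gadgetExpansion S G f).edgeSet.ncard =
      Fintype.card V * S.edgeSet.ncard + G.edgeSet.ncard := by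
  have := Fintype.ofFinite ι
  refine mul_left_cancel₀ two_ne_zero ?_
  calc 2 * (gadgetExpansion S G f).edgeSet.ncard
      = ∑ v, ∑ i, ((S.neighborSet i).ncard + {u ∈ G.neighborSet v | f v u = i}.ncard) := by
        simp_rw [← sum_ncard_neighborSet, Fintype.sum_prod_type, ncard_neighborSet]
    _ = ∑ v, (2 * S.edgeSet.ncard + (G.neighborSet v).ncard) := by
        simp_rw [Finset.sum_add_distrib, sum_ncard_fiber, sum_ncard_neighborSet]
    _ = 2 * (Fintype.card V * S.edgeSet.ncard + G.edgeSet.ncard) := by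
        rw [Finset.sum_add_distrib, sum_ncard_neighborSet, Finset.sum_const, Finset.card_univ,
          smul_eq_mul]
        ring

theorem isClique_image_mk (v : V) {A : Set ι} (hA : S.IsClique A) :
    (gadgetExpansion S G f).IsClique (Prod.mk v '' A) := by
  rintro _ ⟨i, hi, rfl⟩ _ ⟨j, hj, rfl⟩ hij
  exact Or.inl ⟨rfl, hA hi hj fun h ↦ hij (congrArg (Prod.mk v) h)⟩

theorem ncard_neighborSet_le [∀ i, Finite (S.neighborSet i)] [∀ v, Finite (G.neighborSet v)] {d : ℕ}
    (hS : ∀ i, (S.neighborSet i).ncard ≤ d)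
    (hcontact : ∀ v u, G.Adj v u → (S.neighborSet (f v u)).ncard < d)
    (hinj : ∀ v, Set.InjOn (f v) (G.neighborSet v)) (x : V × ι) :
    ((gadgetExpansion S G f).neighborSet x).ncard ≤ d := by
  obtain ⟨v, i⟩ := x
  rw [ncard_neighborSet]
  rcases {u ∈ G.neighborSet v | f v u = i}.eq_empty_or_nonempty with hempty | ⟨u, hu, rfl⟩
  · simpa only [hempty, Set.ncard_empty, add_zero] using hS i
  · have hfiber := Set.ncard_le_one_iff_subsingleton.2
      (subsingleton_fiber_of_injOn (hinj v) (f v u))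
    have := hcontact v u hu
    lia

theorem isQuasiLine (hS : IsQuasiLine S)
    (hcontact : ∀ v u, G.Adj v u → S.IsClique (S.neighborSet (f v u)))
    (hinj : ∀ v, Set.InjOn (f v) (G.neighborSet v)) : IsQuasiLine (gadgetExpansion S G f) := by
  rintro ⟨v, i⟩
  rw [neighborSet_eq]
  rcases {u ∈ G.neighborSet v | f v u = i}.eq_empty_or_nonempty with hempty | ⟨u, hu, rfl⟩
  · obtain ⟨A, B, hA, hB, hAB⟩ := hS i
    refine ⟨_, _, isClique_image_mk v hA, isClique_image_mk v hB, ?_⟩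
    rw [hempty, Set.image_empty, Set.union_empty, ← Set.image_union]
    exact Set.image_mono hAB
  · exact ⟨_, _, isClique_image_mk v (hcontact v u hu),
      .of_subsingleton ((subsingleton_fiber_of_injOn (hinj v) _).image _), subset_rfl⟩

end gadgetExpansion

namespace Shield

instance : DecidableRel Shield.Adj :=
  inferInstanceAs (DecidableRel (SimpleGraph.fromRel _).Adj)

theorem ncard_neighborSet_le (i : Fin 12) : (Shield.neighborSet i).ncard ≤ 3 := by
  rw [ncard_neighborSet_eq_degree]
  decide +revert

theorem ncard_neighborSet_lt {i : Fin 12} (hi : i ∈ Contacts) :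
    (Shield.neighborSet i).ncard < 3 := by
  rw [ncard_neighborSet_eq_degree]
  rcases hi with rfl | rfl | rfl <;> decide

theorem ncard_edgeSet : Shield.edgeSet.ncard = 15 := by
  have hsum : ∑ i, Shield.degree i = 2 * 15 := by decide
  simp only [← ncard_neighborSet_eq_degree, sum_ncard_neighborSet] at hsum
  lia

theorem isClique_neighborSet {i : Fin 12} (hi : i ∈ Contacts) :
    Shield.IsClique (Shield.neighborSet i) := by
  rw [← coe_neighborFinset]
  rcases hi with rfl | rfl | rfl <;> decide

theorem exists_isClique_neighborFinset_erase (i : Fin 12) :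
    ∃ j, Shield.IsClique ((Shield.neighborFinset i).erase j : Set (Fin 12)) := by
  decide +revert

theorem isQuasiLine : IsQuasiLine Shield := fun i ↦ by
  obtain ⟨j, hj⟩ := exists_isClique_neighborFinset_erase i
  refine ⟨_, {j}, hj, isClique_singleton j, ?_⟩
  rw [Finset.coe_erase, coe_neighborFinset, Set.sdiff_union_self]
  exact Set.subset_union_left

end Shield

theorem IsMagnification.eq_gadgetExpansion {V : Type*} {G : SimpleGraph V} {f : V → V → Fin 12}
    {H : SimpleGraph (V × Fin 12)} (hH : IsMagnification G f H) :
    H = gadgetExpansion Shield G f := by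
  ext a b
  exact hH.2.2.2 a b

/-- The magnification of a cubic graph on `n` vertices is claw-free, has maximum
degree at most `3`, has exactly `12 n` vertices, and exactly `33 n / 2` edges. -/
theorem magnification_props {V : Type*} [Fintype V] (G : SimpleGraph V)
    (hcubic : IsRegular' G 3) (f : V → V → Fin 12) (H : SimpleGraph (V × Fin 12))
    (hmag : IsMagnification G f H) :
    ClawFree H ∧ (∀ x : V × Fin 12, (H.neighborSet x).ncard ≤ 3) ∧
    Fintype.card (V × Fin 12) = 12 * Fintype.card V ∧
    2 * H.edgeSet.ncard = 33 * Fintype.card V := by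
  obtain rfl := hmag.eq_gadgetExpansion
  obtain ⟨hmem, hinj, -, -⟩ := hmag
  refine ⟨?_, ?_, ?_, ?_⟩
  · exact (gadgetExpansion.isQuasiLine Shield.isQuasiLine
      (fun v u h ↦ Shield.isClique_neighborSet (hmem v u h)) hinj).clawFree
  · exact gadgetExpansion.ncard_neighborSet_le Shield.ncard_neighborSet_le
      (fun v u h ↦ Shield.ncard_neighborSet_lt (hmem v u h)) hinj
  · rw [Fintype.card_prod, Fintype.card_fin, mul_comm]
  · have hG := hcubic.two_mul_ncard_edgeSet
    rw [gadgetExpansion.ncard_edgeSet, Shield.ncard_edgeSet]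
    lia
end

section
/- Let G be a connected finite simple graph in which every vertex is contained in some triangle. Then G admits no proper perfect edge dominating set; that is, every perfect edge dominating set of G is either an efficient edge dominating set or the full edge set E(G). -/
/-!
If `P` is a perfect edge dominating set, an edge outside `P` meets exactly one edge of `P`, so every
edge at a black vertex belongs to `P`. A neighbour `y` of a black vertex `b` is black as soon as it
lies in a triangle: otherwise `s(y, b)` is the only edge of `P` at `y`, so all the neighbours of `y`
other than `b` are white, and no two neighbours of `y` are adjacent, since white vertices are
adjacent neither to `b` nor to each other. In a connected graph whose vertices lie in triangles,
therefore, either every vertex is black and `P` is the full edge set, or no vertex is black and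
distinct edges of `P` do not meet.
-/

/-- The black vertices (class `B`) of the 3-coloring associated with the edge set `P`: the vertices
incident to at least two edges of `P`. -/
def IsBlack {V : Type*} (P : Set (Sym2 V)) (v : V) : Prop := {e ∈ P | v ∈ e}.Nontrivial

/-- The white vertices (class `W`) of the 3-coloring associated with the edge set `P`: the vertices
incident to no edge of `P`. -/
def IsWhite {V : Type*} (P : Set (Sym2 V)) (v : V) : Prop := ∀ e ∈ P, v ∉ e

namespace IsPEDS

variable {V : Type*} {G : SimpleGraph V} {P : Set (Sym2 V)}

lemma eq_of_edgeDom (hP : IsPEDS G P) {d e f : Sym2 V} (hf : f ∈ G.edgeSet) (hfP : f ∉ P)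
    (hd : d ∈ P) (he : e ∈ P) (hdf : edgeDom d f) (hef : edgeDom e f) : d = e :=
  (hP.2 f hf hfP).unique ⟨hd, hdf⟩ ⟨he, hef⟩

lemma mem_of_isBlack (hP : IsPEDS G P) {v : V} (hv : IsBlack P v) {f : Sym2 V}
    (hf : f ∈ G.edgeSet) (hvf : v ∈ f) : f ∈ P := by
  obtain ⟨d, ⟨hd, hvd⟩, e, ⟨he, hve⟩, hde⟩ := hv
  by_contra hfP
  exact hde (hP.eq_of_edgeDom hf hfP hd he ⟨v, hvd, hvf⟩ ⟨v, hve, hvf⟩)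

lemma not_isWhite_of_adj_isBlack (hP : IsPEDS G P) {v w : V} (hv : IsBlack P v)
    (hvw : G.Adj v w) : ¬ IsWhite P w := fun hw ↦
  hw _ (hP.mem_of_isBlack hv hvw (Sym2.mem_mk_left v w)) (Sym2.mem_mk_right v w)

lemma not_adj_of_isWhite (hP : IsPEDS G P) {v w : V} (hv : IsWhite P v) (hw : IsWhite P w) :
    ¬ G.Adj v w := by
  intro hvw
  have hvwP : s(v, w) ∉ P := fun h ↦ hv _ h (Sym2.mem_mk_left v w)
  obtain ⟨e, ⟨he, u, hue, hu⟩, -⟩ := hP.2 s(v, w) hvw hvwP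
  obtain rfl | rfl := Sym2.mem_iff.mp hu
  · exact hv e he hue
  · exact hw e he hue

lemma isWhite_of_notMem (hP : IsPEDS G P) {v w : V} (hvw : G.Adj v w) (hvwP : s(v, w) ∉ P)
    {e : Sym2 V} (he : e ∈ P) (hve : v ∈ e) : IsWhite P w := by
  intro d hd hwd
  obtain rfl : d = e := hP.eq_of_edgeDom hvw hvwP hd he
    ⟨w, hwd, Sym2.mem_mk_right v w⟩ ⟨v, hve, Sym2.mem_mk_left v w⟩
  obtain rfl : d = s(v, w) := (Sym2.mem_and_mem_iff hvw.ne).mp ⟨hve, hwd⟩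
  exact hvwP hd

lemma isWhite_of_adj_of_not_isBlack (hP : IsPEDS G P) {x y z : V} (hyx : s(y, x) ∈ P)
    (hy : ¬ IsBlack P y) (hyz : G.Adj y z) (hzx : z ≠ x) : IsWhite P z := by
  have hyzP : s(y, z) ∉ P := fun hyzP ↦
    hy ⟨s(y, z), ⟨hyzP, Sym2.mem_mk_left y z⟩, s(y, x), ⟨hyx, Sym2.mem_mk_left y x⟩,
      fun h ↦ hzx (Sym2.congr_right.mp h)⟩
  exact hP.isWhite_of_notMem hyz hyzP hyx (Sym2.mem_mk_left y x)

lemma isBlack_of_adj_of_triangle (hP : IsPEDS G P) {b y a c : V} (hb : IsBlack P b)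
    (hby : G.Adj b y) (hya : G.Adj y a) (hyc : G.Adj y c) (hac : G.Adj a c) : IsBlack P y := by
  by_contra hy
  have hybP : s(y, b) ∈ P := hP.mem_of_isBlack hb hby.symm (Sym2.mem_mk_right y b)
  have white {z : V} (hyz : G.Adj y z) (hzb : z ≠ b) : IsWhite P z :=
    hP.isWhite_of_adj_of_not_isBlack hybP hy hyz hzb
  by_cases hab : a = b
  · subst a
    exact hP.not_isWhite_of_adj_isBlack hb hac (white hyc hac.ne')
  by_cases hcb : c = b
  · subst c
    exact hP.not_isWhite_of_adj_isBlack hb hac.symm (white hya hab)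
  exact hP.not_adj_of_isWhite (white hya hab) (white hyc hcb) hac

lemma isBlack_of_reachable (hP : IsPEDS G P)
    (htri : ∀ v : V, ∃ a b : V, G.Adj v a ∧ G.Adj v b ∧ G.Adj a b) {u v : V}
    (huv : G.Reachable u v) (hu : IsBlack P u) : IsBlack P v := by
  obtain ⟨walk⟩ := huv
  induction walk with
  | nil => exact hu
  | @cons _ y _ huy _ ih =>
    obtain ⟨a, c, hya, hyc, hac⟩ := htri y
    exact ih (hP.isBlack_of_adj_of_triangle hu huy hya hyc hac)

lemma eq_edgeSet_of_forall_isBlack (hP : IsPEDS G P) (h : ∀ v, IsBlack P v) : P = G.edgeSet :=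
  hP.1.antisymm fun f hf ↦ hP.mem_of_isBlack (h f.out.1) hf f.out_fst_mem

lemma isEEDS_of_forall_not_isBlack (hP : IsPEDS G P) (h : ∀ v, ¬ IsBlack P v) : IsEEDS G P := by
  refine ⟨hP.1, fun f hf ↦ ?_⟩
  by_cases hfP : f ∈ P
  · refine ⟨f, ⟨hfP, _, f.out_fst_mem, f.out_fst_mem⟩, ?_⟩
    rintro e ⟨he, v, hve, hvf⟩
    by_contra hef
    exact h v ⟨e, ⟨he, hve⟩, f, ⟨hfP, hvf⟩, hef⟩
  · exact hP.2 f hf hfP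

end IsPEDS

theorem no_proper_peds_general {V : Type*} (G : SimpleGraph V) (hconn : G.Preconnected)
    (htri : ∀ v : V, ∃ a b : V, G.Adj v a ∧ G.Adj v b ∧ G.Adj a b)
    (P : Set (Sym2 V)) (hP : IsPEDS G P) :
    IsEEDS G P ∨ P = G.edgeSet := by
  by_cases h : ∃ b, IsBlack P b
  · obtain ⟨b, hb⟩ := h
    exact .inr (hP.eq_edgeSet_of_forall_isBlack fun v ↦
      hP.isBlack_of_reachable htri (hconn b v) hb)
  · exact .inl (hP.isEEDS_of_forall_not_isBlack (not_exists.mp h))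

/-- In a connected graph in which every vertex lies in a triangle, every perfect
edge dominating set is either an efficient edge dominating set or the full
edge set. -/
theorem no_proper_peds {V : Type*} [Fintype V] (G : SimpleGraph V)
    (hconn : G.Connected)
    (htri : ∀ v : V, ∃ a b : V, G.Adj v a ∧ G.Adj v b ∧ G.Adj a b)
    (P : Set (Sym2 V)) (hP : IsPEDS G P) :
    IsEEDS G P ∨ P = G.edgeSet :=
  no_proper_peds_general G hconn.preconnected htri P hP
end

section
/- Let G be a finite simple graph, k ≥ 0 an integer, S(G) the 3k-subdivision of G, and P a perfect edge dominating set of S(G). Then for every edge e of G, the path S(e) contains at least k edges of P. -/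
/-- `H` is the `3k`-subdivision of `G`, witnessed by the map `ι : V → W`
(the images of the original vertices, "extremes") and, for every ordered pair
`(v, w)` of adjacent vertices, the path `p v w 0, p v w 1, …, p v w (3k+1)`
replacing the edge `vw` (so `p v w 0 = ι v`, `p v w (3k+1) = ι w`, the `3k`
internal vertices are new, pairwise distinct, distinct for distinct edges of `G`,
and the edges of `H` are exactly the consecutive pairs of these paths).
For `k = 0` the subdivision is `G` itself. -/
def IsSubdivision {V W : Type*} (G : SimpleGraph V) (k : ℕ) (H : SimpleGraph W)
    (ι : V → W) (p : V → V → ℕ → W) : Prop :=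
  Function.Injective ι ∧
  (∀ v w, G.Adj v w → p v w 0 = ι v ∧ p v w (3 * k + 1) = ι w) ∧
  (∀ v w, G.Adj v w → ∀ i ≤ 3 * k + 1, p v w i = p w v (3 * k + 1 - i)) ∧
  (∀ v w, G.Adj v w → ∀ i ≤ 3 * k + 1, ∀ j ≤ 3 * k + 1, p v w i = p v w j → i = j) ∧
  (∀ v w, G.Adj v w → ∀ i, 0 < i → i < 3 * k + 1 → p v w i ∉ Set.range ι) ∧
  (∀ v w v' w', G.Adj v w → G.Adj v' w' → ∀ i j, 0 < i → i < 3 * k + 1 →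
      0 < j → j < 3 * k + 1 → p v w i = p v' w' j → s(v, w) = s(v', w')) ∧
  (∀ x : W, (∃ v, x = ι v) ∨
      ∃ v w i, G.Adj v w ∧ 0 < i ∧ i < 3 * k + 1 ∧ x = p v w i) ∧
  (∀ x y : W, H.Adj x y ↔ ∃ v w i, G.Adj v w ∧ i ≤ 3 * k ∧
      ((x = p v w i ∧ y = p v w (i + 1)) ∨ (y = p v w i ∧ x = p v w (i + 1))))

/-- The edge set `S(e)` of the path of the subdivision replacing the edge
`e = vw` of `G`: the edges `e_0, e_1, …, e_{3k}`. -/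
def pathEdges {V W : Type*} (p : V → V → ℕ → W) (k : ℕ) (v w : V) :
    Set (Sym2 W) :=
  {e | ∃ i ≤ 3 * k, e = s(p v w i, p v w (i + 1))}

/-!
Each of the `k` disjoint triples `e_{3j}, e_{3j+1}, e_{3j+2}` of edges of `S(e)` meets `P`: both
ends of the middle edge are internal vertices of `S(e)`, hence of degree two, so an edge dominating
the middle edge is one of the three.
-/

section

variable {V W : Type*}

/-- Edge dominating sets: sets of edges which together dominate every edge of the graph. -/
def IsEDS (G : SimpleGraph V) (P : Set (Sym2 V)) : Prop :=
  P ⊆ G.edgeSet ∧ ∀ f ∈ G.edgeSet, ∃ e ∈ P, edgeDom e f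

theorem edgeDom_refl (e : Sym2 V) : edgeDom e e :=
  ⟨_, e.out_fst_mem, e.out_fst_mem⟩

theorem IsPEDS.isEDS {G : SimpleGraph V} {P : Set (Sym2 V)} (hP : IsPEDS G P) : IsEDS G P := by
  refine ⟨hP.1, fun f hf => ?_⟩
  by_cases hfP : f ∈ P
  · exact ⟨f, hfP, edgeDom_refl f⟩
  · exact (hP.2 f hf hfP).exists

/-- The `i`-th edge of the path through the vertices `q 0, q 1, …`. -/
def stepEdge (q : ℕ → V) (i : ℕ) : Sym2 V :=
  s(q i, q (i + 1))

theorem stepEdge_injOn {q : ℕ → V} {n : ℕ} (hq : Set.InjOn q (Set.Iic n)) :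
    Set.InjOn (stepEdge q) (Set.Iio n) := by
  intro i hi j hj hij
  rw [Set.mem_Iio] at hi hj
  have index_eq {a b : ℕ} (ha : a ≤ n) (hb : b ≤ n) (hab : q a = q b) : a = b := hq ha hb hab
  rcases Sym2.eq_iff.mp hij with ⟨h, -⟩ | ⟨h, h'⟩
  · exact index_eq hi.le hj.le h
  · have i_eq : i = j + 1 := index_eq hi.le hj h
    have succ_i_eq : i + 1 = j := index_eq hi hj.le h'
    lia

/-- A thread of length `n` in `G`: a path `q 0, …, q n` whose internal vertices have degree two
in `G`. The values of `q` beyond `n` are irrelevant. -/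
structure IsThread (G : SimpleGraph V) (q : ℕ → V) (n : ℕ) : Prop where
  injOn : Set.InjOn q (Set.Iic n)
  adj : ∀ i < n, G.Adj (q i) (q (i + 1))
  eq_or_eq_of_adj : ∀ i, i + 1 < n → ∀ x, G.Adj (q (i + 1)) x → x = q i ∨ x = q (i + 2)

namespace IsThread

variable {G : SimpleGraph V} {q : ℕ → V} {n : ℕ} {P : Set (Sym2 V)}

theorem eq_stepEdge_of_mem (hq : IsThread G q n) {i : ℕ} (hi : i + 1 < n) {e : Sym2 V}
    (he : e ∈ G.edgeSet) (hmem : q (i + 1) ∈ e) : e = stepEdge q i ∨ e = stepEdge q (i + 1) := by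
  obtain ⟨x, rfl⟩ := hmem
  rcases hq.eq_or_eq_of_adj i hi x he with rfl | rfl
  · exact .inl Sym2.eq_swap
  · exact .inr rfl

theorem exists_mem_Icc_stepEdge_mem (hq : IsThread G q n) (hP : IsEDS G P) {i : ℕ}
    (hi : i + 2 < n) : ∃ m ∈ Set.Icc i (i + 2), stepEdge q m ∈ P := by
  obtain ⟨e, heP, u, hue, huf⟩ := hP.2 (stepEdge q (i + 1)) (hq.adj (i + 1) (by lia))
  rcases Sym2.mem_iff.mp huf with rfl | rfl
  · rcases hq.eq_stepEdge_of_mem (by lia) (hP.1 heP) hue with rfl | rfl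
    · exact ⟨i, by simp, heP⟩
    · exact ⟨i + 1, by simp, heP⟩
  · rcases hq.eq_stepEdge_of_mem hi (hP.1 heP) hue with rfl | rfl
    · exact ⟨i + 1, by simp, heP⟩
    · exact ⟨i + 2, by simp, heP⟩

theorem div_three_le_ncard (hq : IsThread G q n) (hP : IsEDS G P) :
    n / 3 ≤ (P ∩ stepEdge q '' Set.Iio n).ncard := by
  let indices : Set ℕ := Set.Iio n ∩ stepEdge q ⁻¹' P
  have indices_finite : indices.Finite := (Set.finite_Iio n).subset Set.inter_subset_left
  have image_indices : stepEdge q '' indices = P ∩ stepEdge q '' Set.Iio n := by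
    rw [Set.image_inter_preimage, Set.inter_comm]
  have blocks_met : Set.Iio (n / 3) ⊆ (· / 3) '' indices := by
    intro j hj
    rw [Set.mem_Iio] at hj
    obtain ⟨m, ⟨hjm, hmj⟩, hmP⟩ := hq.exists_mem_Icc_stepEdge_mem hP (i := 3 * j) (by lia)
    exact ⟨m, ⟨Set.mem_Iio.mpr (by lia), hmP⟩, by lia⟩
  calc n / 3 = (Set.Iio (n / 3)).ncard := (Set.ncard_Iio_nat _).symm
    _ ≤ ((· / 3) '' indices).ncard := Set.ncard_le_ncard blocks_met (indices_finite.image _)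
    _ ≤ indices.ncard := Set.ncard_image_le indices_finite
    _ = (stepEdge q '' indices).ncard :=
      ((stepEdge_injOn hq.injOn).mono Set.inter_subset_left).ncard_image.symm
    _ = (P ∩ stepEdge q '' Set.Iio n).ncard := by rw [image_indices]

end IsThread

theorem pathEdges_eq_image_stepEdge (p : V → V → ℕ → W) (k : ℕ) (v w : V) :
    pathEdges p k v w = stepEdge (p v w) '' Set.Iio (3 * k + 1) := by
  ext e
  simp only [pathEdges, stepEdge, Set.mem_ofPred_eq, Set.mem_image, Set.mem_Iio, Nat.lt_succ_iff,
    eq_comm]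

namespace IsSubdivision

variable {G : SimpleGraph V} {k : ℕ} {H : SimpleGraph W} {ι : V → W} {p : V → V → ℕ → W}

theorem path_eq_reverse (hsub : IsSubdivision G k H ι p) {v w : V} (hvw : G.Adj v w) {i j : ℕ}
    (hij : i + j = 3 * k + 1) : p v w i = p w v j := by
  obtain ⟨-, -, hrev, -⟩ := hsub
  rw [hrev v w hvw i (by lia), ← hij, Nat.add_sub_cancel_left]

theorem path_injOn (hsub : IsSubdivision G k H ι p) {v w : V} (hvw : G.Adj v w) :
    Set.InjOn (p v w) (Set.Iic (3 * k + 1)) := by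
  obtain ⟨-, -, -, hinj, -⟩ := hsub
  exact fun i hi j hj => hinj v w hvw i hi j hj

theorem adj_path (hsub : IsSubdivision G k H ι p) {v w : V} (hvw : G.Adj v w) {i : ℕ}
    (hi : i ≤ 3 * k) : H.Adj (p v w i) (p v w (i + 1)) := by
  obtain ⟨-, -, -, -, -, -, -, hadj⟩ := hsub
  exact (hadj _ _).mpr ⟨v, w, i, hvw, hi, .inl ⟨rfl, rfl⟩⟩

theorem exists_path_of_adj (hsub : IsSubdivision G k H ι p) {x y : W} (hxy : H.Adj x y) :
    ∃ v w i, G.Adj v w ∧ i ≤ 3 * k ∧ x = p v w i ∧ y = p v w (i + 1) := by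
  have ⟨_, _, _, _, _, _, _, hadj⟩ := hsub
  obtain ⟨v, w, i, hvw, hi, ⟨rfl, rfl⟩ | ⟨rfl, rfl⟩⟩ := (hadj x y).mp hxy
  · exact ⟨v, w, i, hvw, hi, rfl, rfl⟩
  · exact ⟨w, v, 3 * k - i, hvw.symm, by lia, hsub.path_eq_reverse hvw (by lia),
      hsub.path_eq_reverse hvw (by lia)⟩

theorem internal_of_path_eq (hsub : IsSubdivision G k H ι p) {v w v' w' : V} (hvw : G.Adj v w)
    (hvw' : G.Adj v' w') {i j : ℕ} (hi₀ : 0 < i) (hi : i < 3 * k + 1) (hj : j ≤ 3 * k + 1)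
    (hij : p v w i = p v' w' j) : 0 < j ∧ j < 3 * k + 1 := by
  obtain ⟨-, hend, -, -, hnew, -⟩ := hsub
  obtain ⟨path_zero, path_last⟩ := hend v' w' hvw'
  have not_extreme (u : V) : p v w i ≠ ι u := fun h => hnew v w hvw i hi₀ hi ⟨u, h.symm⟩
  constructor
  · refine Nat.pos_of_ne_zero fun hj₀ => not_extreme v' ?_
    rw [hij, hj₀, path_zero]
  · refine hj.lt_of_ne fun hj_last => not_extreme w' ?_
    rw [hij, hj_last, path_last]

theorem index_eq_of_path_eq (hsub : IsSubdivision G k H ι p) {v w v' w' : V} (hvw : G.Adj v w)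
    (hvw' : G.Adj v' w') {i j : ℕ} (hi₀ : 0 < i) (hi : i < 3 * k + 1) (hj : j ≤ 3 * k + 1)
    (hij : p v w i = p v' w' j) :
    (v' = v ∧ w' = w ∧ j = i) ∨ (v' = w ∧ w' = v ∧ i + j = 3 * k + 1) := by
  obtain ⟨hj₀, hj'⟩ := hsub.internal_of_path_eq hvw hvw' hi₀ hi hj hij
  have ⟨_, _, _, _, _, hdisj, _⟩ := hsub
  have same_edge : s(v, w) = s(v', w') := hdisj v w v' w' hvw hvw' i j hi₀ hi hj₀ hj' hij
  rcases Sym2.eq_iff.mp same_edge with ⟨rfl, rfl⟩ | ⟨rfl, rfl⟩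
  · exact .inl ⟨rfl, rfl, (hsub.path_injOn hvw hi.le hj hij).symm⟩
  · have hrev : p w v j = p v w (3 * k + 1 - j) := hsub.path_eq_reverse hvw' (by lia)
    have i_eq : i = 3 * k + 1 - j :=
      hsub.path_injOn hvw hi.le (Nat.sub_le _ j) (hij.trans hrev)
    exact .inr ⟨rfl, rfl, by lia⟩

theorem isThread (hsub : IsSubdivision G k H ι p) {v w : V} (hvw : G.Adj v w) :
    IsThread H (p v w) (3 * k + 1) where
  injOn := hsub.path_injOn hvw
  adj _ hi := hsub.adj_path hvw (Nat.lt_succ_iff.mp hi)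
  eq_or_eq_of_adj i hi x hx := by
    obtain ⟨v', w', j, hvw', hj, hij, rfl⟩ := hsub.exists_path_of_adj hx
    rcases hsub.index_eq_of_path_eq hvw hvw' i.succ_pos hi (by lia) hij with
      ⟨rfl, rfl, rfl⟩ | ⟨rfl, rfl, hsum⟩
    · exact .inr rfl
    · exact .inl (hsub.path_eq_reverse hvw' (by lia))

end IsSubdivision

theorem subdivision_path_lower_bound_general (G : SimpleGraph V) (k : ℕ) (H : SimpleGraph W)
    (ι : V → W) (p : V → V → ℕ → W) (hsub : IsSubdivision G k H ι p) (P : Set (Sym2 W))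
    (hP : IsEDS H P) {v w : V} (hvw : G.Adj v w) :
    k ≤ (P ∩ pathEdges p k v w).ncard := by
  rw [pathEdges_eq_image_stepEdge]
  calc k = (3 * k + 1) / 3 := by lia
    _ ≤ (P ∩ stepEdge (p v w) '' Set.Iio (3 * k + 1)).ncard :=
      (hsub.isThread hvw).div_three_le_ncard hP

end

/-- For every edge `e = vw` of `G`, the path `S(e)` of the `3k`-subdivision
contains at least `k` edges of any perfect edge dominating set `P` of `S(G)`. -/
theorem subdivision_path_lower_bound {V W : Type*} [Fintype V] [Fintype W]
    (G : SimpleGraph V) (k : ℕ) (H : SimpleGraph W) (ι : V → W) (p : V → V → ℕ → W)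
    (hsub : IsSubdivision G k H ι p) (P : Set (Sym2 W)) (hP : IsPEDS H P)
    {v w : V} (hvw : G.Adj v w) :
    k ≤ (P ∩ pathEdges p k v w).ncard :=
  subdivision_path_lower_bound_general G k H ι p hsub P hP.isEDS hvw
end
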